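/- Let n ≥ 2 and 1 ≤ r ≤ n-1, and let A ⊆ [n]^(r). Then |N(A)| ≥ max{ |N(A₀)| + (r/(n-r))·|A₀|, |N(A₁)| + ((n-r)/r)·|A₁|, |N(A₀)| + |N(A₁)| }, where on the right-hand side A₀, A₁ are the lower and upper n-sections of A and N is taken with respect to the ground set [n-1]. -/

import Mathlib

/-- `[m]^(k)`: the `k`-element subsets of `{1,…,m}`. -/
def rSets (m k : ℕ) : Finset (Finset ℕ) := (Finset.Icc 1 m).powersetCard k

/-- The neighbourhood `N(A) = A ∪ b(A)` of `A ⊆ [m]^(k)` in the graph `Γ_m^(k)`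
where `x ~ y` iff `|x Δ y| = 2`. -/
def nbhd (m k : ℕ) (A : Finset (Finset ℕ)) : Finset (Finset ℕ) :=
  A ∪ (rSets m k).filter (fun x => x ∉ A ∧ ∃ y ∈ A, (symmDiff x y).card = 2)

/-- The lower `n`-section `B₀ = {x ∈ B : n ∉ x}` of a family `B`. -/
def lowerSection (n : ℕ) (B : Finset (Finset ℕ)) : Finset (Finset ℕ) :=
  B.filter (fun x => n ∉ x)

/-- The upper `n`-section `B₁ = {x ∈ [n-1]^(r-1) : x ∪ {n} ∈ B}` of a family
`B ⊆ [n]^(r)`. -/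
def upperSection (n r : ℕ) (B : Finset (Finset ℕ)) : Finset (Finset ℕ) :=
  (rSets (n - 1) (r - 1)).filter (fun x => insert n x ∈ B)

/-!
Sections commute with neighbourhoods up to inclusion: `N(A₀) ⊆ N(A)₀` and `N(A₁) ⊆ N(A)₁`. Moreover
deleting any element of `x ∈ A₀` and adjoining `n` gives a neighbour of `x`, so `N(A)₁` contains the
shadow of `A₀`; dually, `N(A)₀` contains the upper shadow of `A₁`. Double counting of inclusions
between two levels of the cube (local LYM) bounds the size of these shadows from below. The three
inequalities follow by choosing one of the two lower bounds for each summand of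
`|N(A)| = |N(A)₀| + |N(A)₁|`.
-/

open Finset

section LocalLYM

variable {α : Type*} {S : Finset α} {𝒜 ℬ : Finset (Finset α)} {k l : ℕ}

theorem card_mul_choose_le_of_forall_subset_mem (hkl : k ≤ l) (h𝒜 : 𝒜 ⊆ S.powersetCard l)
    (hℬ : ℬ ⊆ S.powersetCard k) (h : ∀ x ∈ 𝒜, ∀ y ∈ S.powersetCard k, y ⊆ x → y ∈ ℬ) :
    #𝒜 * l.choose k ≤ #ℬ * (#S - k).choose (l - k) := by
  classical
  refine card_mul_le_card_mul (fun x y ↦ y ⊆ x) (fun x hx ↦ ?_) (fun y hy ↦ ?_)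
  · obtain ⟨hxS, rfl⟩ := mem_powersetCard.1 (h𝒜 hx)
    rw [← card_powersetCard]
    refine card_le_card fun y hy ↦ ?_
    have hyx : y ⊆ x := (mem_powersetCard.1 hy).1
    exact mem_filter.2 ⟨h x hx y (powersetCard_mono hxS hy) hyx, hyx⟩
  · obtain ⟨hyS, rfl⟩ := mem_powersetCard.1 (hℬ hy)
    rw [← card_filter_powersetCard_subset y S l hyS hkl]
    exact card_le_card (filter_subset_filter _ h𝒜)

theorem card_mul_choose_le_of_forall_superset_mem (hkl : k ≤ l) (h𝒜 : 𝒜 ⊆ S.powersetCard k)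
    (hℬ : ℬ ⊆ S.powersetCard l) (h : ∀ y ∈ 𝒜, ∀ x ∈ S.powersetCard l, y ⊆ x → x ∈ ℬ) :
    #𝒜 * (#S - k).choose (l - k) ≤ #ℬ * l.choose k := by
  classical
  refine card_mul_le_card_mul (fun y x ↦ y ⊆ x) (fun y hy ↦ ?_) (fun x hx ↦ ?_)
  · obtain ⟨hyS, rfl⟩ := mem_powersetCard.1 (h𝒜 hy)
    rw [← card_filter_powersetCard_subset y S l hyS hkl]
    refine card_le_card fun x hx ↦ ?_
    obtain ⟨hxl, hyx⟩ := mem_filter.1 hx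
    exact mem_filter.2 ⟨h y hy x hxl hyx, hyx⟩
  · obtain ⟨-, rfl⟩ := mem_powersetCard.1 (hℬ hx)
    rw [← card_powersetCard]
    refine card_le_card fun y hy ↦ ?_
    obtain ⟨hyA, hyx⟩ := mem_filter.1 hy
    exact mem_powersetCard.2 ⟨hyx, (mem_powersetCard.1 (h𝒜 hyA)).2⟩

end LocalLYM

theorem natCast_div_mul_le_of_mul_le_mul {𝕜 : Type*} [Semifield 𝕜] [LinearOrder 𝕜]
    [IsStrictOrderedRing 𝕜] {a b c d : ℕ} (hc : 0 < c) (h : a * b ≤ d * c) :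
    (b : 𝕜) / c * a ≤ d := by
  rw [div_mul_eq_mul_div, div_le_iff₀ (Nat.cast_pos.2 hc), mul_comm (b : 𝕜)]
  exact_mod_cast h

section SymmDiff

variable {α : Type*} [DecidableEq α] {x y : Finset α} {a : α}

theorem symmDiff_insert_insert_of_notMem (hx : a ∉ x) (hy : a ∉ y) :
    symmDiff (insert a x) (insert a y) = symmDiff x y := by
  ext i
  simp only [mem_symmDiff, mem_insert]
  grind

theorem card_symmDiff_insert_of_subset (hyx : y ⊆ x) (ha : a ∉ x) :
    #(symmDiff x (insert a y)) = #x - #y + 1 := by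
  have hsymm : symmDiff x (insert a y) = insert a (x \ y) := by
    ext i
    simp only [mem_symmDiff, mem_insert, mem_sdiff]
    grind
  rw [hsymm, card_insert_of_notMem fun h ↦ ha (mem_sdiff.1 h).1, card_sdiff_of_subset hyx]

end SymmDiff

section Sections

variable {m k : ℕ} {A B : Finset (Finset ℕ)} {x y : Finset ℕ}

theorem card_of_mem_rSets (hx : x ∈ rSets m k) : #x = k :=
  (mem_powersetCard.1 hx).2

theorem notMem_of_mem_rSets (hx : x ∈ rSets m k) : m + 1 ∉ x := fun h ↦ by
  have := (mem_Icc.1 ((mem_powersetCard.1 hx).1 h)).2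
  omega

theorem mem_rSets_succ_iff_of_notMem (hx : m + 1 ∉ x) : x ∈ rSets (m + 1) k ↔ x ∈ rSets m k := by
  rw [rSets, rSets, mem_powersetCard, mem_powersetCard,
    ← insert_Icc_right_eq_Icc_add_one (Nat.le_add_left 1 m), subset_insert_iff_of_notMem hx]

theorem insert_mem_rSets_succ_iff (hx : m + 1 ∉ x) :
    insert (m + 1) x ∈ rSets (m + 1) (k + 1) ↔ x ∈ rSets m k := by
  rw [rSets, rSets, mem_powersetCard, mem_powersetCard,
    ← insert_Icc_right_eq_Icc_add_one (Nat.le_add_left 1 m), insert_subset_insert_iff hx,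
    card_insert_of_notMem hx, Nat.add_right_cancel_iff]

theorem mem_lowerSection {n : ℕ} : x ∈ lowerSection n B ↔ x ∈ B ∧ n ∉ x :=
  mem_filter

theorem mem_upperSection :
    x ∈ upperSection (m + 1) (k + 1) B ↔ x ∈ rSets m k ∧ insert (m + 1) x ∈ B :=
  mem_filter

theorem lowerSection_subset_rSets (hB : B ⊆ rSets (m + 1) k) :
    lowerSection (m + 1) B ⊆ rSets m k := fun x hx ↦ by
  obtain ⟨hxB, hnx⟩ := mem_lowerSection.1 hx
  exact (mem_rSets_succ_iff_of_notMem hnx).1 (hB hxB)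

theorem upperSection_subset_rSets : upperSection (m + 1) (k + 1) B ⊆ rSets m k :=
  filter_subset _ _

theorem upperSection_eq_memberSubfamily (hB : B ⊆ rSets (m + 1) (k + 1)) :
    upperSection (m + 1) (k + 1) B = B.memberSubfamily (m + 1) := by
  ext x
  rw [mem_upperSection, mem_memberSubfamily]
  constructor
  · rintro ⟨hx, hxB⟩
    exact ⟨hxB, notMem_of_mem_rSets hx⟩
  · rintro ⟨hxB, hnx⟩
    exact ⟨(insert_mem_rSets_succ_iff hnx).1 (hB hxB), hxB⟩

theorem card_lowerSection_add_card_upperSection (hB : B ⊆ rSets (m + 1) (k + 1)) :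
    #(lowerSection (m + 1) B) + #(upperSection (m + 1) (k + 1) B) = #B := by
  rw [upperSection_eq_memberSubfamily hB, add_comm]
  exact card_memberSubfamily_add_card_nonMemberSubfamily (m + 1) B

theorem mem_nbhd : x ∈ nbhd m k A ↔ x ∈ A ∨ x ∈ rSets m k ∧ ∃ y ∈ A, #(symmDiff x y) = 2 := by
  simp only [nbhd, mem_union, mem_filter]
  tauto

theorem nbhd_subset_rSets (hA : A ⊆ rSets m k) : nbhd m k A ⊆ rSets m k :=
  union_subset hA (filter_subset _ _)

theorem nbhd_lowerSection_subset (hA : A ⊆ rSets (m + 1) k) :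
    nbhd m k (lowerSection (m + 1) A) ⊆ lowerSection (m + 1) (nbhd (m + 1) k A) := fun x hx ↦ by
  have hnx := notMem_of_mem_rSets (nbhd_subset_rSets (lowerSection_subset_rSets hA) hx)
  rw [mem_lowerSection, mem_nbhd, mem_rSets_succ_iff_of_notMem hnx]
  refine ⟨?_, hnx⟩
  rcases mem_nbhd.1 hx with hxA | ⟨hxm, y, hy, hxy⟩
  · exact .inl (mem_lowerSection.1 hxA).1
  · exact .inr ⟨hxm, y, (mem_lowerSection.1 hy).1, hxy⟩

theorem nbhd_upperSection_subset :
    nbhd m k (upperSection (m + 1) (k + 1) A) ⊆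
      upperSection (m + 1) (k + 1) (nbhd (m + 1) (k + 1) A) := fun x hx ↦ by
  have hxm := nbhd_subset_rSets upperSection_subset_rSets hx
  have hnx := notMem_of_mem_rSets hxm
  rw [mem_upperSection, mem_nbhd, insert_mem_rSets_succ_iff hnx]
  refine ⟨hxm, ?_⟩
  rcases mem_nbhd.1 hx with hxA | ⟨-, y, hy, hxy⟩
  · exact .inl (mem_upperSection.1 hxA).2
  · obtain ⟨hym, hyA⟩ := mem_upperSection.1 hy
    refine .inr ⟨hxm, insert (m + 1) y, hyA, ?_⟩
    rwa [symmDiff_insert_insert_of_notMem hnx (notMem_of_mem_rSets hym)]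

theorem card_symmDiff_insert_of_mem_rSets (hx : x ∈ rSets m (k + 1)) (hy : y ∈ rSets m k)
    (hyx : y ⊆ x) : #(symmDiff x (insert (m + 1) y)) = 2 := by
  rw [card_symmDiff_insert_of_subset hyx (notMem_of_mem_rSets hx), card_of_mem_rSets hx,
    card_of_mem_rSets hy, Nat.add_sub_cancel_left]

theorem mem_upperSection_nbhd_of_subset (hA : A ⊆ rSets (m + 1) (k + 1))
    (hx : x ∈ lowerSection (m + 1) A) (hy : y ∈ rSets m k) (hyx : y ⊆ x) :
    y ∈ upperSection (m + 1) (k + 1) (nbhd (m + 1) (k + 1) A) := by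
  have hins := (insert_mem_rSets_succ_iff (notMem_of_mem_rSets hy)).2 hy
  refine mem_upperSection.2 ⟨hy, mem_nbhd.2 (.inr ⟨hins, x, (mem_lowerSection.1 hx).1, ?_⟩)⟩
  rw [symmDiff_comm, card_symmDiff_insert_of_mem_rSets (lowerSection_subset_rSets hA hx) hy hyx]

theorem mem_lowerSection_nbhd_of_superset (hy : y ∈ upperSection (m + 1) (k + 1) A)
    (hx : x ∈ rSets m (k + 1)) (hyx : y ⊆ x) :
    x ∈ lowerSection (m + 1) (nbhd (m + 1) (k + 1) A) := by
  obtain ⟨hym, hyA⟩ := mem_upperSection.1 hy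
  have hnx := notMem_of_mem_rSets hx
  have hxm := (mem_rSets_succ_iff_of_notMem hnx).2 hx
  exact mem_lowerSection.2 ⟨mem_nbhd.2 (.inr ⟨hxm, insert (m + 1) y, hyA,
    card_symmDiff_insert_of_mem_rSets hx hym hyx⟩), hnx⟩

theorem card_lowerSection_mul_le (hA : A ⊆ rSets (m + 1) (k + 1)) :
    #(lowerSection (m + 1) A) * (k + 1) ≤
      #(upperSection (m + 1) (k + 1) (nbhd (m + 1) (k + 1) A)) * (m - k) := by
  simpa only [Nat.choose_succ_self_right, Nat.card_Icc, Nat.add_sub_cancel, Nat.add_sub_cancel_left,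
    Nat.choose_one_right] using card_mul_choose_le_of_forall_subset_mem (k.le_add_right 1)
      (lowerSection_subset_rSets hA) upperSection_subset_rSets
      fun _ hx _ ↦ mem_upperSection_nbhd_of_subset hA hx

theorem card_upperSection_mul_le (hA : A ⊆ rSets (m + 1) (k + 1)) :
    #(upperSection (m + 1) (k + 1) A) * (m - k) ≤
      #(lowerSection (m + 1) (nbhd (m + 1) (k + 1) A)) * (k + 1) := by
  simpa only [Nat.choose_succ_self_right, Nat.card_Icc, Nat.add_sub_cancel, Nat.add_sub_cancel_left,
    Nat.choose_one_right] using card_mul_choose_le_of_forall_superset_mem (k.le_add_right 1)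
      upperSection_subset_rSets (lowerSection_subset_rSets (nbhd_subset_rSets hA))
      fun _ hy _ ↦ mem_lowerSection_nbhd_of_superset hy

end Sections

/-- Inequality (2) of the paper: for `A ⊆ [n]^(r)`,
`|N(A)| ≥ max{ |N(A₀)| + (r/(n-r))·|A₀|, |N(A₁)| + ((n-r)/r)·|A₁|, |N(A₀)| + |N(A₁)| }`,
where `A₀, A₁` are the lower and upper `n`-sections of `A`, and on the right-hand side
`N` is taken with respect to the ground set `[n-1]`. -/
theorem stmt_8 (n r : ℕ) (hn : 2 ≤ n) (hr1 : 1 ≤ r) (hrn : r ≤ n - 1)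
    (A : Finset (Finset ℕ)) (hA : A ⊆ rSets n r) :
    ((nbhd n r A).card : ℝ)
      ≥ max (max
          (((nbhd (n - 1) r (lowerSection n A)).card : ℝ)
            + ((r : ℝ) / ((n : ℝ) - r)) * ((lowerSection n A).card : ℝ))
          (((nbhd (n - 1) (r - 1) (upperSection n r A)).card : ℝ)
            + (((n : ℝ) - r) / r) * ((upperSection n r A).card : ℝ)))
          (((nbhd (n - 1) r (lowerSection n A)).card : ℝ)
            + ((nbhd (n - 1) (r - 1) (upperSection n r A)).card : ℝ)) := by
  obtain ⟨m, rfl⟩ : ∃ m, n = m + 1 := ⟨n - 1, by omega⟩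
  obtain ⟨k, rfl⟩ : ∃ k, r = k + 1 := ⟨r - 1, by omega⟩
  have hkm : k < m := hrn
  have hcast : ((m + 1 : ℕ) : ℝ) - (k + 1 : ℕ) = (m - k : ℕ) := by
    rw [Nat.cast_sub hkm.le]; push_cast; ring
  simp only [hcast, Nat.add_sub_cancel]
  have hN : (#(lowerSection (m + 1) (nbhd (m + 1) (k + 1) A)) : ℝ) +
      #(upperSection (m + 1) (k + 1) (nbhd (m + 1) (k + 1) A)) = #(nbhd (m + 1) (k + 1) A) :=
    mod_cast card_lowerSection_add_card_upperSection (nbhd_subset_rSets hA)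
  have hlower : (#(nbhd m (k + 1) (lowerSection (m + 1) A)) : ℝ) ≤
      #(lowerSection (m + 1) (nbhd (m + 1) (k + 1) A)) :=
    mod_cast card_le_card (nbhd_lowerSection_subset hA)
  have hupper : (#(nbhd m k (upperSection (m + 1) (k + 1) A)) : ℝ) ≤
      #(upperSection (m + 1) (k + 1) (nbhd (m + 1) (k + 1) A)) :=
    mod_cast card_le_card nbhd_upperSection_subset
  have hshadow := natCast_div_mul_le_of_mul_le_mul (𝕜 := ℝ) (Nat.sub_pos_of_lt hkm)
    (card_lowerSection_mul_le hA)
  have hupShadow := natCast_div_mul_le_of_mul_le_mul (𝕜 := ℝ) k.succ_pos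
    (card_upperSection_mul_le hA)
  exact max_le (max_le (by linarith) (by linarith)) (by linarith)
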